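/- (Large time behavior.) Let (X,d) be a compact geodesic metric space and let H:X×ℝ→ℝ satisfy H(x,p)=H(x,|p|) and (A1)–(A4); set c := max_{x∈X} H(x,0). Let u₀:X→ℝ be Lipschitz continuous and let u be a Lipschitz continuous metric viscosity solution of ∂ₜu + H(x,|Du|) = 0 in (0,∞)×X with u(0,·)=u₀ on [0,∞)×X. Then there exists a function v:X→ℝ such that u(t,x) + ct converges to v(x) uniformly on X as t → ∞, and v is a metric viscosity solution of the stationary equation H(x,|Dv|) = c in X. -/

import Mathlib

open Filter Metric Set Topology

noncomputable section

/-- A geodesic metric space: any two points are joined by a constant-speed geodesic. -/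
def IsGeodesicSpace (X : Type*) [MetricSpace X] : Prop :=
  ∀ x y : X, ∃ f : ℝ → X, f 0 = x ∧ f 1 = y ∧
    ∀ s ∈ Set.Icc (0:ℝ) 1, ∀ t ∈ Set.Icc (0:ℝ) 1,
      dist (f s) (f t) = |s - t| * dist x y

variable {X : Type*} [MetricSpace X]

/-- Upper local mslope |∇⁺v|(x) = limsup_{y→x} [v(y)-v(x)]₊ / d(y,x). -/
def mslopeUp (v : X → ℝ) (x : X) : ℝ :=
  Filter.limsup (fun y => max (v y - v x) 0 / dist y x) (𝓝[≠] x)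

/-- Lower local mslope |∇⁻v|(x) = limsup_{y→x} [v(y)-v(x)]₋ / d(y,x). -/
def mslopeDown (v : X → ℝ) (x : X) : ℝ :=
  Filter.limsup (fun y => max (v x - v y) 0 / dist y x) (𝓝[≠] x)

/-- Local mslope |∇v|(x) = limsup_{y→x} |v(y)-v(x)| / d(y,x). -/
def mslope (v : X → ℝ) (x : X) : ℝ :=
  Filter.limsup (fun y => |v y - v x| / dist y x) (𝓝[≠] x)

/-- Spatial upper local mslope of a function of time and space. -/
def slopeUpT (u : ℝ × X → ℝ) (z : ℝ × X) : ℝ := mslopeUp (fun y => u (z.1, y)) z.2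

/-- Spatial lower local mslope of a function of time and space. -/
def slopeDownT (u : ℝ × X → ℝ) (z : ℝ × X) : ℝ := mslopeDown (fun y => u (z.1, y)) z.2

/-- Spatial local mslope of a function of time and space. -/
def slopeT (u : ℝ × X → ℝ) (z : ℝ × X) : ℝ := mslope (fun y => u (z.1, y)) z.2

/-- Time derivative ∂ₜu. -/
def timeDeriv (u : ℝ × X → ℝ) (z : ℝ × X) : ℝ := deriv (fun s => u (s, z.2)) z.1

/-- Locally Lipschitz on a set. -/
def LocLipOn {α : Type*} [PseudoMetricSpace α] (s : Set α) (f : α → ℝ) : Prop :=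
  ∀ z ∈ s, ∃ K : NNReal, ∃ t ∈ 𝓝[s] z, LipschitzOnWith K f t

/-- The class 𝒞(Q): locally Lipschitz with (existing) continuous time derivative. -/
def IsCQ (Q : Set (ℝ × X)) (u : ℝ × X → ℝ) : Prop :=
  LocLipOn Q u ∧
  (∀ z ∈ Q, DifferentiableAt ℝ (fun s : ℝ => u (s, z.2)) z.1) ∧
  ContinuousOn (timeDeriv u) Q

/-- The class C̲¹(Q). -/
def IsC1UnderQ (Q : Set (ℝ × X)) (u : ℝ × X → ℝ) : Prop :=
  IsCQ Q u ∧ Set.EqOn (slopeDownT u) (slopeT u) Q ∧ ContinuousOn (slopeT u) Q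

/-- The class C̄¹(Q). -/
def IsC1UpperQ (Q : Set (ℝ × X)) (u : ℝ × X → ℝ) : Prop :=
  IsCQ Q u ∧ Set.EqOn (slopeUpT u) (slopeT u) Q ∧ ContinuousOn (slopeT u) Q

/-- The class 𝒞(U) for stationary problems: locally Lipschitz functions. -/
def IsCU (U : Set X) (v : X → ℝ) : Prop := LocLipOn U v

/-- The class C̲¹(U). -/
def IsC1UnderU (U : Set X) (v : X → ℝ) : Prop :=
  IsCU U v ∧ Set.EqOn (mslopeDown v) (mslope v) U ∧ ContinuousOn (mslope v) U

/-- The class C̄¹(U). -/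
def IsC1UpperU (U : Set X) (v : X → ℝ) : Prop :=
  IsCU U v ∧ Set.EqOn (mslopeUp v) (mslope v) U ∧ ContinuousOn (mslope v) U

/-- F_r(z,p,q) = sup_{p'∈[-1,1]} F(z,p+rp',q) if r ≥ 0, inf if r ≤ 0. -/
def Fr (F : (ℝ × X) → ℝ → ℝ → ℝ) (r : ℝ) (z : ℝ × X) (p q : ℝ) : ℝ :=
  if 0 ≤ r then sSup ((fun p' => F z (p + r * p') q) '' Set.Icc (-1:ℝ) 1)
  else sInf ((fun p' => F z (p + r * p') q) '' Set.Icc (-1:ℝ) 1)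

/-- H_r(x,p) = sup_{p'∈[-1,1]} H(x,p+rp') if r ≥ 0, inf if r ≤ 0. -/
def Hr (H : X → ℝ → ℝ) (r : ℝ) (x : X) (p : ℝ) : ℝ :=
  if 0 ≤ r then sSup ((fun p' => H x (p + r * p')) '' Set.Icc (-1:ℝ) 1)
  else sInf ((fun p' => H x (p + r * p')) '' Set.Icc (-1:ℝ) 1)

/-- Upper semicontinuous envelope (relative to a set) of an extended-real function. -/
def uscEnv {α : Type*} [TopologicalSpace α] (s : Set α) (u : α → EReal) (z : α) : EReal :=
  Filter.limsup u (𝓝[s] z)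

/-- Lower semicontinuous envelope (relative to a set) of an extended-real function. -/
def lscEnv {α : Type*} [TopologicalSpace α] (s : Set α) (u : α → EReal) (z : α) : EReal :=
  Filter.liminf u (𝓝[s] z)

/-- Upper semicontinuous envelope (relative to a set) of a real function. -/
def uscEnvR {α : Type*} [TopologicalSpace α] (s : Set α) (f : α → ℝ) (z : α) : ℝ :=
  Filter.limsup f (𝓝[s] z)

/-- Metric viscosity subsolution of F(z,|Du|,∂ₜu)=0 in Q (Gangbo–Święch). -/
def IsSubsol (Q : Set (ℝ × X)) (F : (ℝ × X) → ℝ → ℝ → ℝ) (u : ℝ × X → EReal) : Prop :=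
  ∀ ψ₁ ψ₂ : ℝ × X → ℝ, IsC1UnderQ Q ψ₁ → IsCQ Q ψ₂ → ∀ z ∈ Q,
    (∃ R > 0, uscEnv Q u z = ((ψ₁ z + ψ₂ z : ℝ) : EReal) ∧
      ∀ w ∈ Metric.ball z R ∩ Q, uscEnv Q u w ≤ ((ψ₁ w + ψ₂ w : ℝ) : EReal)) →
    Fr F (-(uscEnvR Q (slopeT ψ₂) z)) z (slopeT ψ₁ z)
      (timeDeriv (fun w => ψ₁ w + ψ₂ w) z) ≤ 0

/-- Metric viscosity supersolution of F(z,|Du|,∂ₜu)=0 in Q (Gangbo–Święch). -/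
def IsSupersol (Q : Set (ℝ × X)) (F : (ℝ × X) → ℝ → ℝ → ℝ) (u : ℝ × X → EReal) : Prop :=
  ∀ ψ₁ ψ₂ : ℝ × X → ℝ, IsC1UpperQ Q ψ₁ → IsCQ Q ψ₂ → ∀ z ∈ Q,
    (∃ R > 0, lscEnv Q u z = ((ψ₁ z + ψ₂ z : ℝ) : EReal) ∧
      ∀ w ∈ Metric.ball z R ∩ Q, ((ψ₁ w + ψ₂ w : ℝ) : EReal) ≤ lscEnv Q u w) →
    0 ≤ Fr F (uscEnvR Q (slopeT ψ₂) z) z (slopeT ψ₁ z)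
      (timeDeriv (fun w => ψ₁ w + ψ₂ w) z)

/-- Metric viscosity solution. -/
def IsSol (Q : Set (ℝ × X)) (F : (ℝ × X) → ℝ → ℝ → ℝ) (u : ℝ × X → EReal) : Prop :=
  IsSubsol Q F u ∧ IsSupersol Q F u

/-- Metric viscosity subsolution of the stationary equation H(x,|Dv|)=0 in U. -/
def IsSubsolS (U : Set X) (H : X → ℝ → ℝ) (v : X → EReal) : Prop :=
  ∀ ψ₁ ψ₂ : X → ℝ, IsC1UnderU U ψ₁ → IsCU U ψ₂ → ∀ x ∈ U,
    (∃ R > 0, uscEnv U v x = ((ψ₁ x + ψ₂ x : ℝ) : EReal) ∧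
      ∀ w ∈ Metric.ball x R ∩ U, uscEnv U v w ≤ ((ψ₁ w + ψ₂ w : ℝ) : EReal)) →
    Hr H (-(uscEnvR U (mslope ψ₂) x)) x (mslope ψ₁ x) ≤ 0

/-- Metric viscosity supersolution of the stationary equation H(x,|Dv|)=0 in U. -/
def IsSupersolS (U : Set X) (H : X → ℝ → ℝ) (v : X → EReal) : Prop :=
  ∀ ψ₁ ψ₂ : X → ℝ, IsC1UpperU U ψ₁ → IsCU U ψ₂ → ∀ x ∈ U,
    (∃ R > 0, lscEnv U v x = ((ψ₁ x + ψ₂ x : ℝ) : EReal) ∧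
      ∀ w ∈ Metric.ball x R ∩ U, ((ψ₁ w + ψ₂ w : ℝ) : EReal) ≤ lscEnv U v w) →
    0 ≤ Hr H (uscEnvR U (mslope ψ₂) x) x (mslope ψ₁ x)

/-- Metric viscosity solution of the stationary equation. -/
def IsSolS (U : Set X) (H : X → ℝ → ℝ) (v : X → EReal) : Prop :=
  IsSubsolS U H v ∧ IsSupersolS U H v

/-!
Viscosity inequalities are stable under limits, so the pointwise upper limits `v₁` of `u + ct` and
`v₂` of `-(u + ct)` as `t → ∞` yield a subsolution `v₁` and a supersolution `-v₂ ≤ v₁` of the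
stationary equation. Their large time behavior is decided on the set `A` where `H(x,0) = c`: there
`H(x,·) ≥ c`, so `u + ct` is nonincreasing and the two limits agree. Off `A` one has `H(x,0) < c`
while `H(x,·)` is convex, so `θ v₁` is a strict subsolution for `θ < 1`; doubling the variables with
the squared distance, whose slopes are exact in a geodesic space, shows that `θ v₁ + v₂` is
maximized on `A`. Letting `θ → 1` gives `v₁ ≤ -v₂` everywhere.
-/

/-! ### Slopes of locally Lipschitz functions -/

theorem locLipOn_of_locallyLipschitz {α : Type*} [PseudoMetricSpace α] {f : α → ℝ}
    (hf : LocallyLipschitz f) (s : Set α) : LocLipOn s f := fun z _ =>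
  let ⟨K, t, ht, hK⟩ := hf z
  ⟨K, t, mem_nhdsWithin_of_mem_nhds ht, hK⟩

theorem locLipOn_univ_iff {α : Type*} [PseudoMetricSpace α] {f : α → ℝ} :
    LocLipOn univ f ↔ LocallyLipschitz f :=
  ⟨fun h z => by simpa only [nhdsWithin_univ] using h z trivial,
    fun h => locLipOn_of_locallyLipschitz h univ⟩

theorem exists_eventually_eventually_abs_sub_le {v : X → ℝ} (hv : LocallyLipschitz v) (x : X) :
    ∃ K : NNReal, ∀ᶠ y in 𝓝 x, ∀ᶠ z in 𝓝 y, |v z - v y| ≤ K * dist z y := by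
  obtain ⟨K, t, ht, hK⟩ := hv x
  refine ⟨K, ?_⟩
  filter_upwards [eventually_mem_nhds_iff.2 ht] with y hy
  filter_upwards [hy] with z hz using hK.dist_le_mul z hz y (mem_of_mem_nhds hy)

theorem mslope_le {v : X → ℝ} {x : X} {s : ℝ} (hs : 0 ≤ s)
    (h : ∀ᶠ y in 𝓝 x, |v y - v x| ≤ s * dist y x) : mslope v x ≤ s := by
  rcases (𝓝[≠] x).eq_or_neBot with hbot | hbot
  · simpa [mslope, hbot, limsup_eq] using hs
  · refine limsup_le_of_le
      (isCoboundedUnder_le_of_le _ (x := 0) fun y => by positivity) ?_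
    filter_upwards [eventually_nhdsWithin_of_eventually_nhds h] with y hy
    exact div_le_of_le_mul₀ dist_nonneg hs hy

theorem isBoundedUnder_abs_sub_div_dist {v : X → ℝ} (hv : LocallyLipschitz v) (x : X) :
    IsBoundedUnder (· ≤ ·) (𝓝[≠] x) fun y => |v y - v x| / dist y x := by
  obtain ⟨K, hK⟩ := exists_eventually_eventually_abs_sub_le hv x
  refine isBoundedUnder_of_eventually_le (a := K) ?_
  filter_upwards [eventually_nhdsWithin_of_eventually_nhds hK.self_of_nhds] with y hy
  exact div_le_of_le_mul₀ dist_nonneg K.2 hy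

theorem mslope_nonneg {v : X → ℝ} (hv : LocallyLipschitz v) (x : X) : 0 ≤ mslope v x := by
  rcases (𝓝[≠] x).eq_or_neBot with hbot | hbot
  · simp [mslope, hbot, limsup_eq]
  · exact le_limsup_of_frequently_le (.of_forall fun y => by positivity)
      (isBoundedUnder_abs_sub_div_dist hv x)

theorem eventually_abs_sub_le_of_mslope_lt {v : X → ℝ} (hv : LocallyLipschitz v) {x : X} {s : ℝ}
    (h : mslope v x < s) : ∀ᶠ y in 𝓝 x, |v y - v x| ≤ s * dist y x := by
  have hlt := eventually_lt_of_limsup_lt h (isBoundedUnder_abs_sub_div_dist hv x)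
  filter_upwards [eventually_nhdsWithin_iff.1 hlt] with y hy
  rcases eq_or_ne y x with rfl | hne
  · simp only [sub_self, abs_zero, dist_self, mul_zero, le_refl]
  · exact (div_le_iff₀ (dist_pos.2 hne)).1 (hy hne).le

theorem mslope_add_le {v w : X → ℝ} (hv : LocallyLipschitz v) (hw : LocallyLipschitz w) (x : X) :
    mslope (v + w) x ≤ mslope v x + mslope w x := by
  refine le_of_forall_pos_le_add fun ε hε => ?_
  have hv0 := mslope_nonneg hv x
  have hw0 := mslope_nonneg hw x
  refine mslope_le (by positivity) ?_
  filter_upwards [eventually_abs_sub_le_of_mslope_lt hv (lt_add_of_pos_right _ (half_pos hε)),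
    eventually_abs_sub_le_of_mslope_lt hw (lt_add_of_pos_right _ (half_pos hε))] with y h1 h2
  calc |(v + w) y - (v + w) x| = |(v y - v x) + (w y - w x)| := by
        rw [Pi.add_apply, Pi.add_apply, add_sub_add_comm]
    _ ≤ |v y - v x| + |w y - w x| := abs_add_le _ _
    _ ≤ (mslope v x + ε / 2) * dist y x + (mslope w x + ε / 2) * dist y x := add_le_add h1 h2
    _ = (mslope v x + mslope w x + ε) * dist y x := by ring

theorem mslope_const (k : ℝ) : mslope (fun _ : X => k) = 0 :=
  funext fun x => le_antisymm
    (mslope_le le_rfl (.of_forall fun y => by simp))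
    (mslope_nonneg (LocallyLipschitz.const k) x)

theorem mslope_neg (v : X → ℝ) : mslope (-v) = mslope v := by
  ext x
  refine congrArg (limsup · _) (funext fun y => ?_)
  rw [Pi.neg_apply, Pi.neg_apply, neg_sub_neg, abs_sub_comm]

theorem mslopeUp_neg (v : X → ℝ) : mslopeUp (-v) = mslopeDown v := by
  ext x
  refine congrArg (limsup · _) (funext fun y => ?_)
  rw [Pi.neg_apply, Pi.neg_apply, neg_sub_neg]

theorem mslope_add_const (v : X → ℝ) (k : ℝ) : mslope (fun y => v y + k) = mslope v := by
  ext x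
  refine congrArg (limsup · _) (funext fun y => ?_)
  rw [add_sub_add_right_eq_sub]

theorem isBoundedUnder_mslope {v : X → ℝ} (hv : LocallyLipschitz v) (x : X) :
    IsBoundedUnder (· ≤ ·) (𝓝[univ] x) (mslope v) := by
  obtain ⟨K, hK⟩ := exists_eventually_eventually_abs_sub_le hv x
  rw [nhdsWithin_univ]
  exact isBoundedUnder_of_eventually_le (a := K) (hK.mono fun y hy => mslope_le K.2 hy)

/-- The upper semicontinuous envelope `|∇f|*` of the slope of `f`, by which the perturbation `ψ₂`
enters the viscosity inequalities. -/
def slopeEnv (f : X → ℝ) : X → ℝ := uscEnvR univ (mslope f)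

theorem eventually_mslope_lt_of_slopeEnv_lt {v : X → ℝ} (hv : LocallyLipschitz v) {x : X} {s : ℝ}
    (h : slopeEnv v x < s) : ∀ᶠ y in 𝓝 x, mslope v y < s := by
  simpa only [nhdsWithin_univ] using eventually_lt_of_limsup_lt h (isBoundedUnder_mslope hv x)

theorem slopeEnv_le {v : X → ℝ} (hv : LocallyLipschitz v) {x : X} {s : ℝ}
    (h : ∀ᶠ y in 𝓝 x, mslope v y ≤ s) : slopeEnv v x ≤ s := by
  unfold slopeEnv uscEnvR
  rw [nhdsWithin_univ]
  exact limsup_le_of_le (isCoboundedUnder_le_of_le _ (x := 0) (mslope_nonneg hv)) h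

theorem slopeEnv_le_of_mslope_le {v g : X → ℝ} (hv : LocallyLipschitz v) {x : X}
    (hg : ContinuousAt g x) (h : ∀ y, mslope v y ≤ g y) : slopeEnv v x ≤ g x :=
  le_of_forall_gt_imp_ge_of_dense fun _ hs => slopeEnv_le hv <|
    (hg.eventually_lt_const hs).mono fun y hy => (h y).trans hy.le

theorem slopeEnv_nonneg {v : X → ℝ} (hv : LocallyLipschitz v) (x : X) : 0 ≤ slopeEnv v x :=
  have : (𝓝[univ] x).NeBot := by rw [nhdsWithin_univ]; infer_instance
  le_limsup_of_frequently_le (.of_forall (mslope_nonneg hv)) (isBoundedUnder_mslope hv x)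

theorem upperSemicontinuous_slopeEnv {v : X → ℝ} (hv : LocallyLipschitz v) :
    UpperSemicontinuous (slopeEnv v) := fun x s hs => by
  obtain ⟨r, hr, hrs⟩ := exists_between hs
  filter_upwards [(eventually_mslope_lt_of_slopeEnv_lt hv hr).eventually_nhds] with y hy
  exact (slopeEnv_le hv (hy.mono fun z hz => hz.le)).trans_lt hrs

theorem slopeEnv_add_le {v w : X → ℝ} (hv : LocallyLipschitz v) (hw : LocallyLipschitz w) (x : X) :
    slopeEnv (v + w) x ≤ slopeEnv v x + slopeEnv w x := by
  refine le_of_forall_pos_le_add fun ε hε => slopeEnv_le (v := v + w) (hv.add hw) ?_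
  filter_upwards
    [eventually_mslope_lt_of_slopeEnv_lt hv (lt_add_of_pos_right (slopeEnv v x) (half_pos hε)),
    eventually_mslope_lt_of_slopeEnv_lt hw (lt_add_of_pos_right (slopeEnv w x) (half_pos hε))]
    with y h1 h2
  linarith [mslope_add_le hv hw y]

theorem slopeEnv_const (k : ℝ) : slopeEnv (fun _ : X => k) = 0 :=
  funext fun x => le_antisymm
    (slopeEnv_le_of_mslope_le (LocallyLipschitz.const k) continuousAt_const
      fun y => (congrFun (mslope_const k) y).le)
    (slopeEnv_nonneg (LocallyLipschitz.const k) x)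

theorem slopeEnv_neg (v : X → ℝ) : slopeEnv (-v) = slopeEnv v :=
  congrArg (uscEnvR univ) (mslope_neg v)

theorem IsC1UnderU.neg {v : X → ℝ} (h : IsC1UnderU univ v) : IsC1UpperU univ (-v) := by
  obtain ⟨hlip, hdown, hcont⟩ := h
  refine ⟨locLipOn_univ_iff.2 (locLipOn_univ_iff.1 hlip).neg, ?_, ?_⟩
  · rwa [mslope_neg, mslopeUp_neg]
  · rwa [mslope_neg]

theorem IsC1UpperU.neg {v : X → ℝ} (h : IsC1UpperU univ v) : IsC1UnderU univ (-v) := by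
  obtain ⟨hlip, hup, hcont⟩ := h
  refine ⟨locLipOn_univ_iff.2 (locLipOn_univ_iff.1 hlip).neg, ?_, ?_⟩
  · rwa [mslope_neg, ← mslopeUp_neg, neg_neg]
  · rwa [mslope_neg]

theorem isC1UnderU_const (k : ℝ) : IsC1UnderU (univ : Set X) fun _ => k := by
  refine ⟨locLipOn_univ_iff.2 (LocallyLipschitz.const k), fun x _ => ?_, ?_⟩
  · simp only [mslopeDown, mslope, sub_self, max_self, abs_zero]
  · rw [mslope_const]
    exact continuousOn_const

/-! ### The squared distance in a geodesic space -/

theorem IsGeodesicSpace.frequently_dist_add_dist (hgeo : IsGeodesicSpace X) {x y : X}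
    (hne : x ≠ y) : ∃ᶠ z in 𝓝[≠] x, dist x z + dist z y = dist x y := by
  obtain ⟨f, hf0, hf1, hf⟩ := hgeo x y
  have hdist_left : ∀ s ∈ Ioo (0 : ℝ) 1, dist x (f s) = s * dist x y := fun s hs => by
    have := hf 0 (by simp) s ⟨hs.1.le, hs.2.le⟩
    rwa [hf0, zero_sub, abs_neg, abs_of_pos hs.1] at this
  have hdist_right : ∀ s ∈ Ioo (0 : ℝ) 1, dist (f s) y = (1 - s) * dist x y := fun s hs => by
    have := hf s ⟨hs.1.le, hs.2.le⟩ 1 (by simp)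
    rwa [hf1, abs_sub_comm, abs_of_pos (sub_pos.2 hs.2)] at this
  have hIoo : ∀ᶠ s : ℝ in 𝓝[>] 0, s ∈ Ioo (0 : ℝ) 1 := Ioo_mem_nhdsGT one_pos
  have hlim : Tendsto (fun s : ℝ => s * dist x y) (𝓝[>] 0) (𝓝 0) := by
    have hcont : Continuous fun s : ℝ => s * dist x y := by fun_prop
    exact (hcont.tendsto' 0 0 (zero_mul _)).mono_left nhdsWithin_le_nhds
  have hf_tendsto : Tendsto f (𝓝[>] 0) (𝓝[≠] x) := by
    refine tendsto_nhdsWithin_iff.2 ⟨tendsto_iff_dist_tendsto_zero.2 (hlim.congr' ?_), ?_⟩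
    · filter_upwards [hIoo] with s hs
      rw [dist_comm (f s), hdist_left s hs]
    · filter_upwards [hIoo] with s hs
      exact (dist_pos.1 (hdist_left s hs ▸ mul_pos hs.1 (dist_pos.2 hne))).symm
  refine hf_tendsto.frequently (Eventually.frequently ?_)
  filter_upwards [hIoo] with s hs
  rw [hdist_left s hs, hdist_right s hs]
  ring

theorem max_sub_div_dist_le (v : X → ℝ) (x y : X) :
    max (v x - v y) 0 / dist y x ≤ |v y - v x| / dist y x := by
  rw [abs_sub_comm]
  exact div_le_div_of_nonneg_right (max_le (le_abs_self _) (abs_nonneg _)) dist_nonneg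

theorem isBoundedUnder_max_sub_div_dist {v : X → ℝ} (hv : LocallyLipschitz v) (x : X) :
    IsBoundedUnder (· ≤ ·) (𝓝[≠] x) fun y => max (v x - v y) 0 / dist y x :=
  (isBoundedUnder_abs_sub_div_dist hv x).mono_le (.of_forall (max_sub_div_dist_le v x))

theorem mslopeDown_le_mslope {v : X → ℝ} (hv : LocallyLipschitz v) (x : X) :
    mslopeDown v x ≤ mslope v x := by
  rcases (𝓝[≠] x).eq_or_neBot with hbot | hbot
  · simp [mslopeDown, mslope, hbot, limsup_eq]
  · exact limsup_le_limsup (.of_forall (max_sub_div_dist_le v x))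
      (isCoboundedUnder_le_of_le _ (x := 0) fun y => by positivity)
      (isBoundedUnder_abs_sub_div_dist hv x)

theorem mslopeDown_nonneg {v : X → ℝ} (hv : LocallyLipschitz v) (x : X) :
    0 ≤ mslopeDown v x := by
  rcases (𝓝[≠] x).eq_or_neBot with hbot | hbot
  · simp [mslopeDown, hbot, limsup_eq]
  · exact le_limsup_of_frequently_le (.of_forall fun y => by positivity)
      (isBoundedUnder_max_sub_div_dist hv x)

theorem le_mslopeDown_of_frequently {v : X → ℝ} (hv : LocallyLipschitz v) {x : X} {s : ℝ}
    (h : ∃ᶠ z in 𝓝[≠] x, s * dist z x ≤ v x - v z) : s ≤ mslopeDown v x := by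
  refine le_limsup_of_frequently_le ?_ (isBoundedUnder_max_sub_div_dist hv x)
  refine (h.and_eventually self_mem_nhdsWithin).mono fun z ⟨hz, hne⟩ => ?_
  exact (le_div_iff₀ (dist_pos.2 hne)).2 (hz.trans (le_max_left _ _))

theorem locallyLipschitz_dist_sq (k : ℝ) (y : X) : LocallyLipschitz fun x => k * dist x y ^ 2 :=
  have hsq : LocallyLipschitz fun r : ℝ => k * r ^ 2 :=
    ContDiff.locallyLipschitz (𝕂 := ℝ) (by fun_prop)
  hsq.comp (LipschitzWith.dist_left y).locallyLipschitz

theorem mslope_dist_sq_le {k : ℝ} (hk : 0 ≤ k) (x y : X) :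
    mslope (fun z => k * dist z y ^ 2) x ≤ k * (2 * dist x y) := by
  refine le_of_forall_pos_le_add fun ε hε => mslope_le (by positivity) ?_
  have hlim : Tendsto (fun z => k * (dist z y + dist x y)) (𝓝 x) (𝓝 (k * (dist x y + dist x y))) :=
    Continuous.tendsto (by fun_prop) x
  filter_upwards [hlim.eventually_le_const (u := k * (2 * dist x y) + ε) (by linarith)] with z hz
  calc |k * dist z y ^ 2 - k * dist x y ^ 2|
      = k * (dist z y + dist x y) * |dist z y - dist x y| := by
        rw [← mul_sub, sq_sub_sq, ← mul_assoc, abs_mul, abs_of_nonneg (by positivity)]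
    _ ≤ k * (dist z y + dist x y) * dist z x := by gcongr; exact abs_dist_sub_le z x y
    _ ≤ (k * (2 * dist x y) + ε) * dist z x := by gcongr

theorem le_mslopeDown_dist_sq (hgeo : IsGeodesicSpace X) (k : ℝ) (x y : X) :
    k * (2 * dist x y) ≤ mslopeDown (fun z => k * dist z y ^ 2) x := by
  have hlip := locallyLipschitz_dist_sq k y
  rcases eq_or_ne x y with rfl | hne
  · simpa only [dist_self, mul_zero] using mslopeDown_nonneg hlip x
  refine le_of_forall_pos_le_add fun ε hε => ?_
  rw [← sub_le_iff_le_add]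
  have hlim : Tendsto (fun z => k * (dist x y + dist z y)) (𝓝[≠] x)
      (𝓝 (k * (dist x y + dist x y))) :=
    (Continuous.tendsto (by fun_prop) x).mono_left nhdsWithin_le_nhds
  have hnear := hlim.eventually_const_le (u := k * (2 * dist x y) - ε) (by linarith)
  refine le_mslopeDown_of_frequently hlip
    (((hgeo.frequently_dist_add_dist hne).and_eventually hnear).mono fun z ⟨hz, hzε⟩ => ?_)
  calc (k * (2 * dist x y) - ε) * dist z x ≤ k * (dist x y + dist z y) * dist z x := by gcongr
    _ = k * dist x y ^ 2 - k * dist z y ^ 2 := by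
        rw [dist_comm z x, ← mul_sub, sq_sub_sq, ← eq_sub_of_add_eq hz, mul_assoc]

theorem mslope_dist_sq (hgeo : IsGeodesicSpace X) {k : ℝ} (hk : 0 ≤ k) (x y : X) :
    mslope (fun z => k * dist z y ^ 2) x = k * (2 * dist x y) :=
  le_antisymm (mslope_dist_sq_le hk x y) ((le_mslopeDown_dist_sq hgeo k x y).trans
    (mslopeDown_le_mslope (locallyLipschitz_dist_sq k y) x))

theorem isC1UnderU_dist_sq (hgeo : IsGeodesicSpace X) {k : ℝ} (hk : 0 ≤ k) (y : X) :
    IsC1UnderU univ fun z => k * dist z y ^ 2 := by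
  refine ⟨locLipOn_univ_iff.2 (locallyLipschitz_dist_sq k y), fun x _ => ?_, ?_⟩
  · refine le_antisymm (mslopeDown_le_mslope (locallyLipschitz_dist_sq k y) x) ?_
    rw [mslope_dist_sq hgeo hk]
    exact le_mslopeDown_dist_sq hgeo k x y
  · rw [funext fun x => mslope_dist_sq hgeo hk x y]
    fun_prop

theorem slopeEnv_dist_sq_le {k : ℝ} (hk : 0 ≤ k) (x y : X) :
    slopeEnv (fun z => k * dist z y ^ 2) x ≤ k * (2 * dist x y) :=
  slopeEnv_le_of_mslope_le (g := fun x => k * (2 * dist x y)) (locallyLipschitz_dist_sq k y)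
    (Continuous.continuousAt (by fun_prop)) fun x => mslope_dist_sq_le hk x y

/-! ### The viscosity inequalities for real-valued continuous functions -/

theorem image_add_mul_Icc (p : ℝ) {r : ℝ} (hr : 0 ≤ r) :
    (fun s => p + r * s) '' Icc (-1) 1 = closedBall p r := by
  rw [← affinity_unitClosedBall hr, Real.closedBall_eq_Icc, zero_sub, zero_add, ← image_smul,
    ← image_vadd, image_image]
  rfl

theorem image_add_neg_mul_Icc (p : ℝ) {r : ℝ} (hr : 0 ≤ r) :
    (fun s => p + -r * s) '' Icc (-1) 1 = closedBall p r := by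
  rw [← image_add_mul_Icc p hr]
  nth_rw 2 [← neg_neg (1 : ℝ)]
  rw [← image_neg_Icc, image_image]
  simp only [mul_neg, neg_mul, neg_neg]

theorem sInf_image_le_iff {α : Type*} [TopologicalSpace α] {K : Set α} (hK : IsCompact K)
    (hne : K.Nonempty) {f : α → ℝ} (hf : Continuous f) {a : ℝ} :
    sInf (f '' K) ≤ a ↔ ∃ q ∈ K, f q ≤ a := by
  simpa only [not_lt, not_forall, exists_prop] using
    not_congr (hK.lt_sInf_iff_of_continuous hne hf.continuousOn a)

theorem le_sSup_image_iff {α : Type*} [TopologicalSpace α] {K : Set α} (hK : IsCompact K)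
    (hne : K.Nonempty) {f : α → ℝ} (hf : Continuous f) {a : ℝ} :
    a ≤ sSup (f '' K) ↔ ∃ q ∈ K, a ≤ f q := by
  simpa only [not_lt, not_forall, exists_prop] using
    not_congr (hK.sSup_lt_iff_of_continuous hne hf.continuousOn a)

theorem Hr_neg_le_zero_iff {Y : Type*} {G : Y → ℝ → ℝ} {x : Y} (hG : Continuous (G x)) {r : ℝ}
    (hr : 0 ≤ r) (p : ℝ) : Hr G (-r) x p ≤ 0 ↔ ∃ q ∈ closedBall p r, G x q ≤ 0 := by
  rcases hr.eq_or_lt with rfl | hpos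
  · simp [Hr]
  · rw [Hr, if_neg (by linarith), ← image_image (G x), image_add_neg_mul_Icc p hr]
    exact sInf_image_le_iff (isCompact_closedBall p r) (nonempty_closedBall.2 hr) hG

theorem zero_le_Hr_iff {Y : Type*} {G : Y → ℝ → ℝ} {x : Y} (hG : Continuous (G x)) {r : ℝ}
    (hr : 0 ≤ r) (p : ℝ) : 0 ≤ Hr G r x p ↔ ∃ q ∈ closedBall p r, 0 ≤ G x q := by
  rw [Hr, if_pos hr, ← image_image (G x), image_add_mul_Icc p hr]
  exact le_sSup_image_iff (isCompact_closedBall p r) (nonempty_closedBall.2 hr) hG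

theorem uscEnv_coe {α : Type*} [TopologicalSpace α] {s : Set α} {f : α → ℝ}
    (hf : ContinuousOn f s) {z : α} (hz : z ∈ s) : uscEnv s (fun w => (f w : EReal)) z = f z :=
  have := mem_closure_iff_nhdsWithin_neBot.1 (subset_closure hz)
  ((continuous_coe_real_ereal.tendsto _).comp (hf z hz)).limsup_eq

theorem lscEnv_coe {α : Type*} [TopologicalSpace α] {s : Set α} {f : α → ℝ}
    (hf : ContinuousOn f s) {z : α} (hz : z ∈ s) : lscEnv s (fun w => (f w : EReal)) z = f z :=
  have := mem_closure_iff_nhdsWithin_neBot.1 (subset_closure hz)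
  ((continuous_coe_real_ereal.tendsto _).comp (hf z hz)).liminf_eq

/-- Real-valued subsolutions of `G(x,|Dv|) = 0` on the whole space, with the infimum in the
viscosity inequality written out as an existential. Supersolutions are encoded by duality: `v` is
one when `StationarySubsol (-G) (-v)`. -/
def StationarySubsol (G : X → ℝ → ℝ) (v : X → ℝ) : Prop :=
  ∀ ψ₁ ψ₂ : X → ℝ, IsC1UnderU univ ψ₁ → LocallyLipschitz ψ₂ → ∀ x,
    IsLocalMax (v - (ψ₁ + ψ₂)) x →
    ∃ q ∈ closedBall (mslope ψ₁ x) (slopeEnv ψ₂ x), G x q ≤ 0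

/-- Real-valued subsolutions of `∂ₜu + H(x,|Du|) = 0` for positive times, tested only with functions
`ψ₁(x) + ψ₂(x) + g(t)`. Supersolutions are encoded by duality: for them
`EvolutionSubsol (-H) (-u)`. -/
def EvolutionSubsol (H : X → ℝ → ℝ) (u : ℝ × X → ℝ) : Prop :=
  ∀ (ψ₁ ψ₂ : X → ℝ) (g : ℝ → ℝ), IsC1UnderU univ ψ₁ → LocallyLipschitz ψ₂ → ContDiff ℝ 1 g →
    ∀ t > 0, ∀ x, IsLocalMax (fun w => u w - (ψ₁ w.2 + ψ₂ w.2 + g w.1)) (t, x) →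
    ∃ q ∈ closedBall (mslope ψ₁ x) (slopeEnv ψ₂ x), deriv g t + H x q ≤ 0

theorem StationarySubsol.isSubsolS {G : X → ℝ → ℝ} (hG : ∀ x, Continuous (G x)) {v : X → ℝ}
    (hv : Continuous v) (h : StationarySubsol G v) :
    IsSubsolS univ G fun x => (v x : EReal) := by
  rintro ψ₁ ψ₂ hψ₁ hψ₂ x - ⟨R, hR, hzero, hle⟩
  have hψ₂' := locLipOn_univ_iff.1 hψ₂
  simp only [uscEnv_coe hv.continuousOn (mem_univ _), EReal.coe_eq_coe_iff,
    EReal.coe_le_coe_iff] at hzero hle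
  refine (Hr_neg_le_zero_iff (hG x) (slopeEnv_nonneg hψ₂' x) _).2 (h ψ₁ ψ₂ hψ₁ hψ₂' x ?_)
  filter_upwards [ball_mem_nhds x hR] with y hy
  exact (sub_nonpos.2 (hle y ⟨hy, trivial⟩)).trans (sub_nonneg.2 hzero.ge)

theorem StationarySubsol.isSupersolS {G : X → ℝ → ℝ} (hG : ∀ x, Continuous (G x)) {v : X → ℝ}
    (hv : Continuous v) (h : StationarySubsol (-G) (-v)) :
    IsSupersolS univ G fun x => (v x : EReal) := by
  rintro ψ₁ ψ₂ hψ₁ hψ₂ x - ⟨R, hR, hzero, hle⟩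
  have hψ₂' := locLipOn_univ_iff.1 hψ₂
  simp only [lscEnv_coe hv.continuousOn (mem_univ _), EReal.coe_eq_coe_iff,
    EReal.coe_le_coe_iff] at hzero hle
  have hmax : IsLocalMax (-v - (-ψ₁ + -ψ₂)) x := by
    filter_upwards [ball_mem_nhds x hR] with y hy
    simp only [Pi.sub_apply, Pi.add_apply, Pi.neg_apply]
    linarith [hle y ⟨hy, trivial⟩]
  obtain ⟨q, hq, hGq⟩ := h (-ψ₁) (-ψ₂) hψ₁.neg hψ₂'.neg x hmax
  rw [mslope_neg, slopeEnv_neg] at hq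
  exact (zero_le_Hr_iff (hG x) (slopeEnv_nonneg hψ₂' x) _).2 ⟨q, hq, neg_nonpos.1 hGq⟩

theorem uscEnvR_comp_snd {Q : Set (ℝ × X)} (hQ : IsOpen Q) {z : ℝ × X} (hz : z ∈ Q) (f : X → ℝ) :
    uscEnvR Q (fun w => f w.2) z = uscEnvR univ f z.2 := by
  rw [uscEnvR, hQ.nhdsWithin_eq hz, uscEnvR, nhdsWithin_univ, ← map_snd_nhds]
  rfl

theorem isCQ_space_add_time (Q : Set (ℝ × X)) {f : X → ℝ} {g : ℝ → ℝ} (hf : LocallyLipschitz f)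
    (hg : ContDiff ℝ 1 g) : IsCQ Q fun w => f w.2 + g w.1 := by
  have hdiff := hg.differentiable one_ne_zero
  have hderiv : timeDeriv (fun w : ℝ × X => f w.2 + g w.1) = fun w => deriv g w.1 :=
    funext fun z => deriv_const_add (f z.2)
  refine ⟨locLipOn_of_locallyLipschitz ?_ Q, fun z _ => (hdiff z.1).const_add (f z.2), ?_⟩
  · exact (hf.comp LipschitzWith.prod_snd.locallyLipschitz).add
      (hg.locallyLipschitz.comp LipschitzWith.prod_fst.locallyLipschitz)
  · rw [hderiv]
    exact (hg.continuous_deriv_one.comp continuous_fst).continuousOn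

theorem isCQ_space (Q : Set (ℝ × X)) {f : X → ℝ} (hf : LocallyLipschitz f) :
    IsCQ Q fun w => f w.2 := by
  simpa only [add_zero] using isCQ_space_add_time Q hf (contDiff_const (c := (0 : ℝ)))

theorem IsC1UnderU.isC1UnderQ {ψ : X → ℝ} (h : IsC1UnderU univ ψ) (Q : Set (ℝ × X)) :
    IsC1UnderQ Q fun w => ψ w.2 :=
  ⟨isCQ_space Q (locLipOn_univ_iff.1 h.1), fun z _ => h.2.1 (mem_univ z.2),
    h.2.2.comp continuous_snd.continuousOn fun _ _ => mem_univ _⟩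

theorem IsC1UpperU.isC1UpperQ {ψ : X → ℝ} (h : IsC1UpperU univ ψ) (Q : Set (ℝ × X)) :
    IsC1UpperQ Q fun w => ψ w.2 :=
  ⟨isCQ_space Q (locLipOn_univ_iff.1 h.1), fun z _ => h.2.1 (mem_univ z.2),
    h.2.2.comp continuous_snd.continuousOn fun _ _ => mem_univ _⟩

theorem uscEnvR_slopeT_space_add_time {Q : Set (ℝ × X)} (hQ : IsOpen Q) {z : ℝ × X} (hz : z ∈ Q)
    (f : X → ℝ) (g : ℝ → ℝ) :
    uscEnvR Q (slopeT fun w => f w.2 + g w.1) z = slopeEnv f z.2 := by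
  have hslope : (slopeT fun w : ℝ × X => f w.2 + g w.1) = fun w => mslope f w.2 :=
    funext fun w => congrFun (mslope_add_const f (g w.1)) w.2
  rw [hslope, uscEnvR_comp_snd hQ hz]
  rfl

theorem timeDeriv_space_add_space_add_time {Y : Type*} (f₁ f₂ : Y → ℝ) (g : ℝ → ℝ) (z : ℝ × Y) :
    timeDeriv (fun w : ℝ × Y => f₁ w.2 + (f₂ w.2 + g w.1)) z = deriv g z.1 := by
  simp only [timeDeriv, deriv_const_add]

theorem IsSubsol.evolutionSubsol {H : X → ℝ → ℝ} (hH : ∀ x, Continuous (H x)) {u : ℝ × X → ℝ}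
    (hu : ContinuousOn u (Ioi 0 ×ˢ univ))
    (h : IsSubsol (Ioi (0 : ℝ) ×ˢ (univ : Set X)) (fun z p q => q + H z.2 p)
      fun z => (u z : EReal)) : EvolutionSubsol H u := by
  intro ψ₁ ψ₂ g hψ₁ hψ₂ hg t ht x hmax
  have hQ : IsOpen (Ioi (0 : ℝ) ×ˢ (univ : Set X)) := isOpen_Ioi.prod isOpen_univ
  have hz : (t, x) ∈ Ioi (0 : ℝ) ×ˢ (univ : Set X) := ⟨ht, mem_univ x⟩
  set k := u (t, x) - (ψ₁ x + ψ₂ x + g t)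
  have hgk : ContDiff ℝ 1 fun s => g s + k := hg.add contDiff_const
  obtain ⟨R, hR, hball⟩ := Metric.eventually_nhds_iff_ball.1 hmax
  have hvisc := h (fun w => ψ₁ w.2) (fun w => ψ₂ w.2 + (g w.1 + k)) (hψ₁.isC1UnderQ _)
    (isCQ_space_add_time _ hψ₂ hgk) (t, x) hz ⟨R, hR, ?_, ?_⟩
  · rw [uscEnvR_slopeT_space_add_time hQ hz ψ₂ fun s => g s + k,
      timeDeriv_space_add_space_add_time ψ₁ ψ₂ fun s => g s + k, deriv_add_const] at hvisc
    exact (Hr_neg_le_zero_iff (G := fun (z : ℝ × X) p => deriv g t + H z.2 p) (x := (t, x))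
      (continuous_const.add (hH x)) (slopeEnv_nonneg hψ₂ x) _).1 hvisc
  · rw [uscEnv_coe hu hz, EReal.coe_eq_coe_iff]
    ring
  · rintro w ⟨hw, hwQ⟩
    rw [uscEnv_coe hu hwQ, EReal.coe_le_coe_iff]
    linarith [hball w hw]

theorem IsSupersol.evolutionSubsol_neg {H : X → ℝ → ℝ} (hH : ∀ x, Continuous (H x))
    {u : ℝ × X → ℝ} (hu : ContinuousOn u (Ioi 0 ×ˢ univ))
    (h : IsSupersol (Ioi (0 : ℝ) ×ˢ (univ : Set X)) (fun z p q => q + H z.2 p)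
      fun z => (u z : EReal)) : EvolutionSubsol (-H) (-u) := by
  intro ψ₁ ψ₂ g hψ₁ hψ₂ hg t ht x hmax
  have hQ : IsOpen (Ioi (0 : ℝ) ×ˢ (univ : Set X)) := isOpen_Ioi.prod isOpen_univ
  have hz : (t, x) ∈ Ioi (0 : ℝ) ×ˢ (univ : Set X) := ⟨ht, mem_univ x⟩
  set k := (-u) (t, x) - (ψ₁ x + ψ₂ x + g t)
  have hgk : ContDiff ℝ 1 fun s => -(g s + k) := (hg.add contDiff_const).neg
  obtain ⟨R, hR, hball⟩ := Metric.eventually_nhds_iff_ball.1 hmax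
  have hvisc := h (fun w => (-ψ₁) w.2) (fun w => (-ψ₂) w.2 + -(g w.1 + k))
    (hψ₁.neg.isC1UpperQ _) (isCQ_space_add_time _ hψ₂.neg hgk) (t, x) hz ⟨R, hR, ?_, ?_⟩
  · rw [uscEnvR_slopeT_space_add_time hQ hz (-ψ₂) fun s => -(g s + k),
      timeDeriv_space_add_space_add_time (-ψ₁) (-ψ₂) fun s => -(g s + k), deriv.fun_neg,
      deriv_add_const, slopeEnv_neg] at hvisc
    obtain ⟨q, hq, hHq⟩ := (zero_le_Hr_iff (G := fun (z : ℝ × X) p => -deriv g t + H z.2 p)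
      (x := (t, x)) (continuous_const.add (hH x)) (slopeEnv_nonneg hψ₂ x) _).1 hvisc
    refine ⟨q, mslope_neg ψ₁ ▸ hq, ?_⟩
    simp only [Pi.neg_apply]
    linarith
  · rw [lscEnv_coe hu hz, EReal.coe_eq_coe_iff]
    simp only [Pi.neg_apply, k]
    ring
  · rintro w ⟨hw, hwQ⟩
    rw [lscEnv_coe hu hwQ, EReal.coe_le_coe_iff]
    have := hball w hw
    simp only [Pi.neg_apply, k] at this ⊢
    linarith

/-! ### From the evolution equation to the stationary equation -/

/-- `v` is the pointwise limit superior of the family `w` along `l`, and the upper bound it gives is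
attained uniformly. This is the form in which the upper half-relaxed limit enters the argument. -/
structure IsUniformLimsup {ι α : Type*} (l : Filter ι) (w : ι → α → ℝ) (v : α → ℝ) : Prop where
  eventually_le : ∀ ε > 0, ∀ᶠ t in l, ∀ x, w t x ≤ v x + ε
  frequently_ge : ∀ x, ∀ ε > 0, ∃ᶠ t in l, v x - ε ≤ w t x

theorem IsUniformLimsup.exists_isLocalMax [ProperSpace X] {w : ℝ × X → ℝ} {v ψ : X → ℝ} {x₀ : X}
    (hlim : IsUniformLimsup atTop (fun t x => w (t, x)) v) (hw : ContinuousOn w (Ioi 0 ×ˢ univ))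
    (hψ : Continuous ψ) (hmax : IsLocalMax (v - ψ) x₀) {ε : ℝ} (hε : 0 < ε) :
    ∃ T, ∃ z ∈ ball (T, x₀) ε, 0 < z.1 ∧
      IsLocalMax (fun z => w z - (ψ z.2 + dist z.2 x₀ ^ 2 + (z.1 - T) ^ 2)) z := by
  obtain ⟨R, hR, hball⟩ := Metric.eventually_nhds_iff_ball.1 hmax
  obtain ⟨ρ, hρ, hρR⟩ := exists_between (lt_min hR hε)
  have hη : 0 < ρ ^ 2 / 3 := by positivity
  obtain ⟨T₀, hT₀⟩ := eventually_atTop.1 (hlim.eventually_le _ hη)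
  obtain ⟨T, hTge, hT⟩ := frequently_atTop.1 (hlim.frequently_ge x₀ _ hη) (max T₀ 0 + ρ + 1)
  have hbounds : ∀ z ∈ closedBall (T, x₀) ρ, T₀ ≤ z.1 ∧ 0 < z.1 ∧ z.2 ∈ ball x₀ R := fun z hz => by
    rw [mem_closedBall, Prod.dist_eq, max_le_iff, Real.dist_eq, abs_le] at hz
    refine ⟨?_, ?_, hz.2.trans_lt (hρR.trans_le (min_le_left _ _))⟩
    · linarith [le_max_left T₀ 0]
    · linarith [le_max_right T₀ 0]
  set f : ℝ × X → ℝ := fun z => w z - (ψ z.2 + dist z.2 x₀ ^ 2 + (z.1 - T) ^ 2)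
  have hcont : ContinuousOn f (closedBall (T, x₀) ρ) :=
    (hw.mono fun z hz => ⟨(hbounds z hz).2.1, mem_univ _⟩).sub (by fun_prop)
  have hboundary : ∀ z ∈ closedBall (T, x₀) ρ \ ball (T, x₀) ρ, f z < f (T, x₀) := by
    rintro z ⟨hzc, hzo⟩
    have hpenalty : ρ ^ 2 ≤ dist z.2 x₀ ^ 2 + (z.1 - T) ^ 2 := by
      rw [mem_ball, Prod.dist_eq, not_lt, le_max_iff, Real.dist_eq] at hzo
      rcases hzo with h | h
      · rw [← sq_abs (z.1 - T)]
        exact (pow_le_pow_left₀ hρ.le h 2).trans (le_add_of_nonneg_left (sq_nonneg _))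
      · exact (pow_le_pow_left₀ hρ.le h 2).trans (le_add_of_nonneg_right (sq_nonneg _))
    have hupper : w z ≤ v z.2 + ρ ^ 2 / 3 := hT₀ z.1 (hbounds z hzc).1 z.2
    have hvψ : v z.2 - ψ z.2 ≤ v x₀ - ψ x₀ := hball z.2 (hbounds z hzc).2.2
    simp only [f, dist_self, sub_self]
    linarith
  obtain ⟨z, hz, hzmax⟩ := (isCompact_closedBall (T, x₀) ρ).exists_isLocalMax_mem_open
    ball_subset_closedBall hcont (mem_closedBall_self hρ.le) hboundary isOpen_ball
  exact ⟨T, z, ball_subset_ball (hρR.le.trans (min_le_right _ _)) hz,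
    (hbounds z (ball_subset_closedBall hz)).2.1, hzmax⟩

theorem EvolutionSubsol.exists_near [ProperSpace X] {H : X → ℝ → ℝ} {u : ℝ × X → ℝ}
    (h : EvolutionSubsol H u) (hu : ContinuousOn u (Ioi 0 ×ˢ univ)) {c : ℝ} {v : X → ℝ}
    (hlim : IsUniformLimsup atTop (fun t x => u (t, x) + c * t) v) {ψ₁ ψ₂ : X → ℝ}
    (hψ₁ : IsC1UnderU univ ψ₁) (hψ₂ : LocallyLipschitz ψ₂) {x₀ : X}
    (hmax : IsLocalMax (v - (ψ₁ + ψ₂)) x₀) {ε : ℝ} (hε : 0 < ε) :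
    ∃ x ∈ ball x₀ ε, ∃ q ∈ closedBall (mslope ψ₁ x) (slopeEnv ψ₂ x + 2 * ε),
      H x q - c ≤ 2 * ε := by
  have hdist := locallyLipschitz_dist_sq 1 x₀
  obtain ⟨T, ⟨t, x⟩, hz, ht, hlocmax⟩ := IsUniformLimsup.exists_isLocalMax
    (w := fun z => u z + c * z.1) hlim (hu.add (by fun_prop))
    ((locLipOn_univ_iff.1 hψ₁.1).continuous.add hψ₂.continuous) hmax hε
  rw [mem_ball, Prod.dist_eq, max_lt_iff, Real.dist_eq, abs_lt] at hz
  have hderiv : deriv (fun s => (s - T) ^ 2 - c * s) t = 2 * (t - T) - c := by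
    have hd : HasDerivAt (fun s => (s - T) ^ 2 - c * s) _ t :=
      (((hasDerivAt_id t).sub_const T).pow 2).sub ((hasDerivAt_id t).const_mul c)
    simpa using hd.deriv
  obtain ⟨q, hq, hHq⟩ := h ψ₁ (ψ₂ + fun y => 1 * dist y x₀ ^ 2) (fun s => (s - T) ^ 2 - c * s) hψ₁
    (hψ₂.add hdist) (by fun_prop) t ht x <| by
      convert hlocmax using 2
      simp only [Pi.add_apply]
      ring
  refine ⟨x, hz.2, q, closedBall_subset_closedBall ?_ hq, ?_⟩
  · linarith [slopeEnv_add_le hψ₂ hdist x, slopeEnv_dist_sq_le zero_le_one x x₀]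
  · linarith [hz.1.1]

theorem exists_mem_closedBall_le_zero {G : X → ℝ → ℝ} (hG : Continuous fun w : X × ℝ => G w.1 w.2)
    {x₀ : X} {p r : X → ℝ} (hp : ContinuousAt p x₀) (hr : UpperSemicontinuousAt r x₀)
    (h : ∀ ε > 0, ∃ x ∈ ball x₀ ε, ∃ q ∈ closedBall (p x) (r x + ε), G x q ≤ ε) :
    ∃ q ∈ closedBall (p x₀) (r x₀), G x₀ q ≤ 0 := by
  have hδ : Tendsto (fun n : ℕ => 1 / ((n : ℝ) + 1)) atTop (𝓝 0) :=
    tendsto_one_div_add_atTop_nhds_zero_nat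
  choose x hx q hq hGq using fun n : ℕ => h (1 / ((n : ℝ) + 1)) (by positivity)
  have hx_tendsto : Tendsto x atTop (𝓝 x₀) :=
    tendsto_iff_dist_tendsto_zero.2 (squeeze_zero (fun _ => dist_nonneg) (fun n => (hx n).le) hδ)
  have hq_near : ∀ δ > 0, ∀ᶠ n in atTop, q n ∈ closedBall (p x₀) (r x₀ + δ) := fun δ hδ0 => by
    filter_upwards [hx_tendsto.eventually (Metric.tendsto_nhds.1 hp (δ / 3) (by positivity)),
      hx_tendsto.eventually (hr (r x₀ + δ / 3) (by linarith)),
      hδ.eventually_le_const (u := δ / 3) (by positivity)] with n hpn hrn hδn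
    refine closedBall_subset_closedBall' ?_ (hq n)
    linarith
  obtain ⟨q₀, -, φ, hφ, hφq⟩ := tendsto_subseq_of_frequently_bounded isBounded_closedBall
    (hq_near 1 one_pos).frequently
  refine ⟨q₀, mem_closedBall.2 (le_of_forall_pos_le_add fun δ hδ0 => ?_), ?_⟩
  · exact mem_closedBall.1 (isClosed_closedBall.mem_of_tendsto hφq
      (hφ.tendsto_atTop.eventually (hq_near δ hδ0)))
  · have hpair : Tendsto (fun n => (x (φ n), q (φ n))) atTop (𝓝 (x₀, q₀)) :=
      (hx_tendsto.comp hφ.tendsto_atTop).prodMk_nhds hφq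
    exact le_of_tendsto_of_tendsto' ((hG.tendsto _).comp hpair) (hδ.comp hφ.tendsto_atTop)
      fun n => hGq (φ n)

theorem EvolutionSubsol.stationarySubsol [ProperSpace X] {H : X → ℝ → ℝ} {u : ℝ × X → ℝ}
    (h : EvolutionSubsol H u) (hH : Continuous fun w : X × ℝ => H w.1 w.2)
    (hu : ContinuousOn u (Ioi 0 ×ˢ univ)) {c : ℝ} {v : X → ℝ}
    (hlim : IsUniformLimsup atTop (fun t x => u (t, x) + c * t) v) :
    StationarySubsol (fun x p => H x p - c) v := by
  intro ψ₁ ψ₂ hψ₁ hψ₂ x₀ hmax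
  refine exists_mem_closedBall_le_zero (G := fun x p => H x p - c) (hH.sub continuous_const)
    (hψ₁.2.2.continuousAt univ_mem)
    (upperSemicontinuous_slopeEnv hψ₂ x₀) fun ε hε => ?_
  obtain ⟨x, hx, q, hq, hHq⟩ := h.exists_near hu hlim hψ₁ hψ₂ hmax (half_pos hε)
  rw [mul_div_cancel₀ ε two_ne_zero] at hq hHq
  exact ⟨x, ball_subset_ball (half_le_self hε.le) hx, q, hq, hHq⟩

/-! ### Bounds for subsolutions of the evolution equation -/

theorem exists_isMaxOn_sub_mul_sq {Y : Type*} [TopologicalSpace Y] [CompactSpace Y] [Nonempty Y]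
    {f : ℝ × Y → ℝ} {t₁ L δ : ℝ} (hf : ContinuousOn f (Ici t₁ ×ˢ univ))
    (hL : ∀ s ≥ t₁, ∀ y, f (s, y) ≤ f (t₁, y) + L * (s - t₁)) (hδ : 0 < δ) :
    ∃ z ∈ Ici t₁ ×ˢ univ, IsMaxOn (fun w => f w - δ * (w.1 - t₁) ^ 2) (Ici t₁ ×ˢ univ) z := by
  set τ := t₁ + |L| / δ
  have hτ : t₁ ≤ τ := le_add_of_nonneg_right (by positivity)
  obtain ⟨z, hz, hmax⟩ := (isCompact_Icc.prod isCompact_univ).exists_isMaxOn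
    ((nonempty_Icc.2 hτ).prod univ_nonempty)
    ((hf.mono (prod_mono Icc_subset_Ici_self subset_rfl)).sub
      (g := fun w : ℝ × Y => δ * (w.1 - t₁) ^ 2) (by fun_prop))
  refine ⟨z, ⟨hz.1.1, mem_univ _⟩, ?_⟩
  rintro ⟨s, y⟩ ⟨hs, -⟩
  rcases le_total s τ with hsτ | hτs
  · exact hmax ⟨⟨hs, hsτ⟩, mem_univ y⟩
  · have hLδ : L ≤ δ * (s - t₁) :=
      (le_abs_self L).trans ((div_le_iff₀' hδ).1 (le_sub_iff_add_le'.2 hτs))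
    calc f (s, y) - δ * (s - t₁) ^ 2
        ≤ f (t₁, y) + (L - δ * (s - t₁)) * (s - t₁) := by linarith [hL s hs y]
      _ ≤ f (t₁, y) := add_le_of_nonpos_right
          (mul_nonpos_of_nonpos_of_nonneg (sub_nonpos.2 hLδ) (sub_nonneg.2 hs))
      _ = f (t₁, y) - δ * (t₁ - t₁) ^ 2 := by simp only [sub_self]; ring
      _ ≤ f z - δ * (z.1 - t₁) ^ 2 := hmax ⟨⟨le_rfl, hτ⟩, mem_univ y⟩

theorem EvolutionSubsol.eq_of_isMaxOn {H : X → ℝ → ℝ} {u : ℝ × X → ℝ} (h : EvolutionSubsol H u)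
    {ψ : X → ℝ} (hψ : LocallyLipschitz ψ) {t₁ b δ : ℝ} (ht₁ : 0 ≤ t₁) (hδ : 0 < δ)
    (hb : ∀ t > t₁, ∀ x, (∀ y, u (t, y) - ψ y ≤ u (t, x) - ψ x) →
      ∀ q ∈ closedBall 0 (slopeEnv ψ x), 0 ≤ b + H x q) {t : ℝ} {x : X} (ht : t₁ ≤ t)
    (hmax : IsMaxOn (fun w => u w - ψ w.2 - b * (w.1 - t₁) - δ * (w.1 - t₁) ^ 2)
      (Ici t₁ ×ˢ univ) (t, x)) : t = t₁ := by
  by_contra hne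
  have hlt : t₁ < t := lt_of_le_of_ne ht (Ne.symm hne)
  have hmax_slice : ∀ y, u (t, y) - ψ y ≤ u (t, x) - ψ x := fun y => by
    linarith [isMaxOn_iff.1 hmax (t, y) ⟨ht, trivial⟩]
  obtain ⟨q, hq, hHq⟩ := h (fun _ => 0) ψ (fun r => b * (r - t₁) + δ * (r - t₁) ^ 2)
    (isC1UnderU_const 0) hψ (by fun_prop) t (ht₁.trans_lt hlt) x <| by
      filter_upwards [hmax.isLocalMax (prod_mem_nhds (Ici_mem_nhds hlt) univ_mem)] with w hw
      linarith
  have hderiv : deriv (fun r => b * (r - t₁) + δ * (r - t₁) ^ 2) t = b + δ * (2 * (t - t₁)) := by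
    have hid := (hasDerivAt_id t).sub_const t₁
    have hd : HasDerivAt (fun r => b * (r - t₁) + δ * (r - t₁) ^ 2) _ t :=
      (hid.const_mul b).add ((hid.pow 2).const_mul δ)
    simpa using hd.deriv
  rw [mslope_const] at hq
  linarith [hb t hlt x hmax_slice q hq, mul_pos hδ (sub_pos.2 hlt)]

theorem EvolutionSubsol.sub_le_add_mul [CompactSpace X] {H : X → ℝ → ℝ} {u : ℝ × X → ℝ}
    (h : EvolutionSubsol H u) {M : NNReal} (hu : LipschitzOnWith M u (Ici 0 ×ˢ univ)) {ψ : X → ℝ}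
    (hψ : LocallyLipschitz ψ) {t₁ b B : ℝ} (ht₁ : 0 ≤ t₁)
    (hb : ∀ t > t₁, ∀ x, (∀ y, u (t, y) - ψ y ≤ u (t, x) - ψ x) →
      ∀ q ∈ closedBall 0 (slopeEnv ψ x), 0 ≤ b + H x q)
    (hB : ∀ y, u (t₁, y) - ψ y ≤ B) {t : ℝ} (ht : t₁ ≤ t) (x : X) :
    u (t, x) - ψ x ≤ B + b * (t - t₁) := by
  have : Nonempty X := ⟨x⟩
  have hψc := hψ.continuous
  set f : ℝ × X → ℝ := fun w => u w - ψ w.2 - b * (w.1 - t₁)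
  have hf : ContinuousOn f (Ici t₁ ×ˢ univ) := ((hu.continuousOn.mono
    (prod_mono (Ici_subset_Ici.2 ht₁) subset_rfl)).sub (by fun_prop)).sub (by fun_prop)
  have hgrowth : ∀ s ≥ t₁, ∀ y, f (s, y) ≤ f (t₁, y) + (M - b) * (s - t₁) := fun s hs y => by
    have hdist := hu.dist_le_mul (s, y) ⟨ht₁.trans hs, trivial⟩ (t₁, y) ⟨ht₁, trivial⟩
    rw [dist_prod_same_right, Real.dist_eq, Real.dist_eq, abs_of_nonneg (sub_nonneg.2 hs)] at hdist
    simp only [f]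
    linarith [le_abs_self (u (s, y) - u (t₁, y))]
  have hpenalized : ∀ δ > 0, f (t, x) - δ * (t - t₁) ^ 2 ≤ B := fun δ hδ => by
    obtain ⟨⟨s, y⟩, ⟨hs, -⟩, hmax⟩ := exists_isMaxOn_sub_mul_sq hf hgrowth hδ
    have hst : s = t₁ := h.eq_of_isMaxOn hψ ht₁ hδ hb hs hmax
    calc f (t, x) - δ * (t - t₁) ^ 2 ≤ f (s, y) - δ * (s - t₁) ^ 2 :=
          isMaxOn_iff.1 hmax (t, x) ⟨ht, trivial⟩
      _ = u (t₁, y) - ψ y := by simp only [f, hst, sub_self]; ring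
      _ ≤ B := hB y
  have hlim : Tendsto (fun δ => f (t, x) - δ * (t - t₁) ^ 2) (𝓝[>] 0) (𝓝 (f (t, x))) :=
    (Continuous.tendsto' (by fun_prop) 0 _ (by simp)).mono_left nhdsWithin_le_nhds
  linarith [le_of_tendsto hlim (eventually_nhdsWithin_of_forall hpenalized)]

theorem EvolutionSubsol.le_add_mul [CompactSpace X] {H : X → ℝ → ℝ} {u : ℝ × X → ℝ}
    (h : EvolutionSubsol H u) {M : NNReal} (hu : LipschitzOnWith M u (Ici 0 ×ˢ univ)) {b B : ℝ}
    (hb : ∀ x, 0 ≤ b + H x 0) (hB : ∀ y, u (0, y) ≤ B) {t : ℝ} (ht : 0 ≤ t) (x : X) :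
    u (t, x) ≤ B + b * t := by
  have := h.sub_le_add_mul hu (LocallyLipschitz.const 0) le_rfl (b := b) (B := B)
    (fun t _ x _ q hq => ?_) (by simpa using hB) ht x
  · simpa using this
  · rw [slopeEnv_const, Pi.zero_apply, closedBall_zero, mem_singleton_iff] at hq
    exact hq ▸ hb x

theorem lipschitzWith_slice {α β : Type*} [PseudoMetricSpace α] [PseudoMetricSpace β]
    {u : α × β → ℝ} {M : NNReal} {s : Set α} (hu : LipschitzOnWith M u (s ×ˢ univ)) {t : α}
    (ht : t ∈ s) : LipschitzWith M fun x => u (t, x) :=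
  LipschitzWith.of_dist_le_mul fun x y => by
    simpa only [dist_prod_same_left] using
      hu.dist_le_mul (t, x) ⟨ht, trivial⟩ (t, y) ⟨ht, trivial⟩

theorem EvolutionSubsol.antitoneOn [CompactSpace X] {H : X → ℝ → ℝ} {u : ℝ × X → ℝ}
    (h : EvolutionSubsol H u) {M : NNReal} (hu : LipschitzOnWith M u (Ici 0 ×ˢ univ)) {c : ℝ}
    {a : X} (ha : ∀ q, c ≤ H a q) : AntitoneOn (fun t => u (t, a) + c * t) (Ici 0) := by
  have hslice : ∀ t ≥ 0, ∀ y, u (t, y) ≤ u (t, a) + M * dist y a := fun t ht y =>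
    (lipschitzWith_slice hu (mem_Ici.2 ht)).le_add_mul y a
  -- A cone steeper than `u` forces the spatial maximum of the difference to sit at its vertex `a`.
  have hψ : LocallyLipschitz fun y => (M + 1) * dist y a :=
    ((lipschitzWith_smul (M + 1 : ℝ)).comp (LipschitzWith.dist_left a)).locallyLipschitz
  intro s hs t _ hst
  have hcomp := h.sub_le_add_mul hu hψ hs (b := -c) (B := u (s, a)) (fun r hr x hmax q _ => ?_)
    (fun y => ?_) hst a
  · simp only [dist_self, mul_zero, sub_zero] at hcomp ⊢
    linarith
  · have hxa : x = a := by
      have := hmax a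
      rw [dist_self, mul_zero, sub_zero] at this
      exact dist_le_zero.1 (by linarith [hslice r (hs.out.trans hr.le) x])
    linarith [hxa ▸ ha q]
  · linarith [hslice s hs y, dist_nonneg (x := y) (y := a)]

theorem EvolutionSubsol.exists_abs_add_mul_le [CompactSpace X] {H : X → ℝ → ℝ} {u : ℝ × X → ℝ}
    (hsub : EvolutionSubsol H u) (hsup : EvolutionSubsol (-H) (-u)) {M : NNReal}
    (hu : LipschitzOnWith M u (Ici 0 ×ˢ univ)) {c : ℝ} {a : X} (ha : ∀ q, c ≤ H a q)
    (hc : ∀ x, H x 0 ≤ c) : ∃ B, ∀ t ≥ 0, ∀ x, |u (t, x) + c * t| ≤ B := by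
  have hslice : ∀ t ≥ 0, ∀ x, u (t, x) ≤ u (t, a) + M * diam (univ : Set X) := fun t ht x =>
    (lipschitzWith_slice hu (mem_Ici.2 ht)).le_add_mul x a |>.trans <| by
      gcongr
      exact dist_le_diam_of_mem (isCompact_univ (X := X)).isBounded (mem_univ x) (mem_univ a)
  obtain ⟨N, hN⟩ := (isCompact_univ (X := X)).exists_bound_of_continuousOn
    (lipschitzWith_slice hu self_mem_Ici).continuous.continuousOn
  refine ⟨max (u (0, a) + M * diam (univ : Set X)) N, fun t ht x =>
    abs_le'.2 ⟨le_max_of_le_left ?_, ?_⟩⟩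
  · have hanti : u (t, a) + c * t ≤ u (0, a) + c * 0 := hsub.antitoneOn hu ha self_mem_Ici ht ht
    linarith [hslice t ht x]
  · have hlower : -u (t, x) ≤ N + c * t := hsup.le_add_mul hu.neg
      (fun y => le_add_neg_iff_le.2 (hc y))
      (fun y => (neg_le_abs _).trans (hN y (mem_univ y))) ht x
    exact le_max_of_le_right (by linarith)

/-! ### Uniform upper limits -/

theorem eventually_forall_le_add_of_lipschitzWith {ι Y : Type*} {l : Filter ι}
    [PseudoMetricSpace Y] [CompactSpace Y] {w : ι → Y → ℝ} {v : Y → ℝ} {M : NNReal}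
    (hw : ∀ᶠ t in l, LipschitzWith M (w t)) (hv : Continuous v)
    (h : ∀ x, ∀ ε > 0, ∀ᶠ t in l, w t x ≤ v x + ε) {ε : ℝ} (hε : 0 < ε) :
    ∀ᶠ t in l, ∀ x, w t x ≤ v x + ε := by
  refine mem_prod_top.1 (nhdsSet_univ (X := Y) ▸
    isCompact_univ.mem_prod_nhdsSet_of_forall (s := {z | w z.1 z.2 ≤ v z.2 + ε}) fun x _ => ?_)
  have hlt : ∀ᶠ y in 𝓝 x, v x + ε / 2 + M * dist y x < v y + ε :=
    ContinuousAt.eventually_lt (by fun_prop) (by fun_prop) (by rw [dist_self]; linarith)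
  filter_upwards [(hw.and (h x (ε / 2) (half_pos hε))).prod_mk hlt] with ⟨t, y⟩ ⟨⟨ht, htx⟩, hy⟩
  linarith [ht.le_add_mul y x]

theorem exists_isUniformLimsup {ι Y : Type*} {l : Filter ι} [l.NeBot] [PseudoMetricSpace Y]
    [CompactSpace Y] {w : ι → Y → ℝ} {M : NNReal} {B : ℝ} (hw : ∀ᶠ t in l, LipschitzWith M (w t))
    (hB : ∀ᶠ t in l, ∀ x, |w t x| ≤ B) : ∃ v, LipschitzWith M v ∧ IsUniformLimsup l w v := by
  have hle : ∀ x, ∀ ε > 0, ∀ᶠ t in l, w t x ≤ limsup (w · x) l + ε := fun x ε hε =>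
    (eventually_lt_of_limsup_lt (lt_add_of_pos_right _ hε) (isBoundedUnder_of_eventually_le
      (hB.mono fun t ht => (abs_le.1 (ht x)).2))).mono fun _ => le_of_lt
  have hfreq : ∀ x, ∀ ε > 0, ∃ᶠ t in l, limsup (w · x) l - ε ≤ w t x := fun x ε hε =>
    (frequently_lt_of_lt_limsup (isCoboundedUnder_le_of_eventually_le l
      (hB.mono fun t ht => (abs_le.1 (ht x)).1)) (sub_lt_self _ hε)).mono fun _ => le_of_lt
  have hv : LipschitzWith M fun x => limsup (w · x) l :=
    LipschitzWith.of_le_add_mul M fun x y => le_of_forall_pos_le_add fun ε hε => by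
      obtain ⟨t, hx, hy, ht⟩ := ((hfreq x (ε / 2) (half_pos hε)).and_eventually
        ((hle y (ε / 2) (half_pos hε)).and hw)).exists
      linarith [ht.le_add_mul x y]
  exact ⟨_, hv, fun ε hε => eventually_forall_le_add_of_lipschitzWith hw hv.continuous hle hε,
    hfreq⟩

theorem IsUniformLimsup.neg_le {ι α : Type*} {l : Filter ι} [l.NeBot] {w : ι → α → ℝ}
    {v₁ v₂ : α → ℝ} (h₁ : IsUniformLimsup l w v₁) (h₂ : IsUniformLimsup l (-w) v₂) : -v₂ ≤ v₁ :=
  fun x => le_of_forall_pos_le_add fun ε hε => by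
    obtain ⟨t, ht₁, ht₂⟩ := ((h₁.eventually_le (ε / 2) (half_pos hε)).and
      (h₂.eventually_le (ε / 2) (half_pos hε))).exists
    have hwx : -w t x ≤ v₂ x + ε / 2 := ht₂ x
    rw [Pi.neg_apply]
    linarith [ht₁ x]

theorem IsUniformLimsup.le_neg_of_antitoneOn {α : Type*} {w : ℝ → α → ℝ} {v₁ v₂ : α → ℝ}
    (h₁ : IsUniformLimsup atTop w v₁) (h₂ : IsUniformLimsup atTop (-w) v₂) {r : ℝ} {x : α}
    (hanti : AntitoneOn (fun t => w t x) (Ici r)) : v₁ x ≤ -v₂ x :=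
  le_of_forall_pos_le_add fun ε hε => by
    obtain ⟨s, hs, hrs⟩ := ((h₂.frequently_ge x (ε / 2) (half_pos hε)).and_eventually
      (eventually_ge_atTop r)).exists
    obtain ⟨t, ht, hst⟩ := ((h₁.frequently_ge x (ε / 2) (half_pos hε)).and_eventually
      (eventually_ge_atTop s)).exists
    have hws : v₂ x - ε / 2 ≤ -w s x := hs
    have hwts : w t x ≤ w s x := hanti hrs (hrs.trans hst) hst
    linarith

theorem IsUniformLimsup.tendstoUniformly {ι α : Type*} {l : Filter ι} {w : ι → α → ℝ} {v : α → ℝ}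
    (h₁ : IsUniformLimsup l w v) (h₂ : IsUniformLimsup l (-w) (-v)) : TendstoUniformly w v l := by
  refine Metric.tendstoUniformly_iff.2 fun ε hε => ?_
  filter_upwards [h₁.eventually_le (ε / 2) (half_pos hε), h₂.eventually_le (ε / 2) (half_pos hε)]
    with t ht₁ ht₂ x
  have hwx : -w t x ≤ -v x + ε / 2 := ht₂ x
  rw [Real.dist_eq, abs_lt]
  constructor <;> linarith [ht₁ x]

/-! ### Comparison for the stationary equation -/

theorem StationarySubsol.le_zero_of_isLocalMax_sub_dist_sq (hgeo : IsGeodesicSpace X)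
    {G : X → ℝ → ℝ} {v : X → ℝ} (h : StationarySubsol G v) {k : ℝ} (hk : 0 ≤ k) {x y : X}
    (hmax : IsLocalMax (fun z => v z - k * dist z y ^ 2) x) : G x (k * (2 * dist x y)) ≤ 0 := by
  obtain ⟨q, hq, hGq⟩ := h (fun z => k * dist z y ^ 2) (fun _ => 0) (isC1UnderU_dist_sq hgeo hk y)
    (LocallyLipschitz.const 0) x (by simpa [Pi.add_def, Pi.sub_def] using hmax)
  rw [slopeEnv_const, Pi.zero_apply, closedBall_zero, mem_singleton_iff,
    mslope_dist_sq hgeo hk] at hq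
  exact hq ▸ hGq

theorem StationarySubsol.exists_doubling_max [CompactSpace X] [Nonempty X]
    (hgeo : IsGeodesicSpace X) {G : X → ℝ → ℝ} {v w : X → ℝ} {M : NNReal} (hv : Continuous v)
    (hw : LipschitzWith M w) (hsub : StationarySubsol G v) (hsup : StationarySubsol (-G) (-w))
    {θ k : ℝ} (hθ : 0 < θ) (hk : 0 < k) :
    ∃ x y p, (∀ z, θ * v z - w z ≤ θ * v x - w y) ∧ dist y x ≤ M / k ∧ p ∈ Icc 0 (2 * M : ℝ) ∧
      G x (p / θ) ≤ 0 ∧ 0 ≤ G y p := by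
  have hwc := hw.continuous
  obtain ⟨⟨x, y⟩, -, hmax⟩ := (isCompact_univ (X := X × X)).exists_isMaxOn univ_nonempty
    (f := fun z => θ * v z.1 - w z.2 - k * dist z.1 z.2 ^ 2) (by fun_prop)
  replace hmax : ∀ a b, θ * v a - w b - k * dist a b ^ 2 ≤ θ * v x - w y - k * dist x y ^ 2 :=
    fun a b => hmax (mem_univ (a, b))
  have hkdist : k * dist x y ≤ M := by
    rcases dist_nonneg.eq_or_lt (a := 0) (b := dist x y) with hzero | hpos
    · rw [← hzero, mul_zero]
      exact M.2
    · have hdiag := hmax x x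
      rw [dist_self] at hdiag
      refine le_of_mul_le_mul_right ?_ hpos
      linarith [hw.le_add_mul x y]
  refine ⟨x, y, k * (2 * dist x y), fun z => ?_, ?_, ⟨by positivity, by linarith⟩, ?_, ?_⟩
  · have hdiag := hmax z z
    rw [dist_self] at hdiag
    linarith [mul_nonneg hk.le (sq_nonneg (dist x y))]
  · rwa [le_div_iff₀' hk, dist_comm]
  · rw [← div_mul_eq_mul_div]
    refine hsub.le_zero_of_isLocalMax_sub_dist_sq hgeo (by positivity) (.of_forall fun z => ?_)
    have hscale : ∀ a, v a - k / θ * dist a y ^ 2 = (θ * v a - k * dist a y ^ 2) / θ := fun a => by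
      field_simp
    beta_reduce
    rw [hscale, hscale]
    exact div_le_div_of_nonneg_right (by linarith [hmax z y]) hθ.le
  · rw [dist_comm]
    refine neg_nonpos.1 (hsup.le_zero_of_isLocalMax_sub_dist_sq hgeo hk.le (.of_forall fun z => ?_))
    simp only [Pi.neg_apply, dist_comm _ x]
    linarith [hmax x z]

theorem StationarySubsol.exists_max_sub [CompactSpace X] [Nonempty X] (hgeo : IsGeodesicSpace X)
    {G : X → ℝ → ℝ} (hG : Continuous fun w : X × ℝ => G w.1 w.2) {v w : X → ℝ} {M : NNReal}
    (hv : Continuous v) (hw : LipschitzWith M w) (hsub : StationarySubsol G v)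
    (hsup : StationarySubsol (-G) (-w)) {θ : ℝ} (hθ : 0 < θ) :
    ∃ a p, (∀ z, θ * v z - w z ≤ θ * v a - w a) ∧ G a (p / θ) ≤ 0 ∧ 0 ≤ G a p := by
  choose x y p hmax hdist hp hGx hGy using fun n : ℕ =>
    hsub.exists_doubling_max hgeo hv hw hsup hθ (k := (n : ℝ) + 1) n.cast_add_one_pos
  obtain ⟨⟨a, q⟩, -, φ, hφ, hφlim⟩ := (isCompact_univ.prod isCompact_Icc).tendsto_subseq
    (x := fun n => (x n, p n)) fun n => ⟨mem_univ _, hp n⟩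
  have hx : Tendsto (x ∘ φ) atTop (𝓝 a) := (continuous_fst.tendsto _).comp hφlim
  have hq : Tendsto (p ∘ φ) atTop (𝓝 q) := (continuous_snd.tendsto _).comp hφlim
  have hdist_lim : Tendsto (fun n => dist (x n) (y n)) atTop (𝓝 0) :=
    squeeze_zero (fun _ => dist_nonneg) (fun n => dist_comm (x n) (y n) ▸ hdist n)
      (tendsto_const_nhds.div_atTop
        (tendsto_atTop_add_const_right _ _ tendsto_natCast_atTop_atTop))
  have hy : Tendsto (y ∘ φ) atTop (𝓝 a) :=
    (tendsto_iff_of_dist (hdist_lim.comp hφ.tendsto_atTop)).1 hx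
  refine ⟨a, q, fun z => ?_, ?_, ?_⟩
  · exact ge_of_tendsto' ((((hv.tendsto a).comp hx).const_mul θ).sub
      ((hw.continuous.tendsto a).comp hy)) fun n => hmax (φ n) z
  · exact le_of_tendsto' ((hG.tendsto (a, q / θ)).comp (hx.prodMk_nhds (hq.div_const θ)))
      fun n => hGx (φ n)
  · exact ge_of_tendsto' ((hG.tendsto (a, q)).comp (hy.prodMk_nhds hq)) fun n => hGy (φ n)

theorem map_zero_nonneg_of_map_div_nonpos {f : ℝ → ℝ} (hf : ConvexOn ℝ univ f) {θ p : ℝ}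
    (hθ : θ ∈ Ioo 0 1) (hp_div : f (p / θ) ≤ 0) (hp : 0 ≤ f p) : 0 ≤ f 0 := by
  have hconv := hf.2 (mem_univ (p / θ)) (mem_univ 0) hθ.1.le (sub_pos.2 hθ.2).le
    (add_sub_cancel θ 1)
  rw [smul_zero, add_zero, smul_eq_mul, mul_div_cancel₀ p hθ.1.ne', smul_eq_mul, smul_eq_mul]
    at hconv
  have hnonneg : 0 ≤ (1 - θ) * f 0 := by
    linarith [mul_nonpos_of_nonneg_of_nonpos hθ.1.le hp_div]
  exact nonneg_of_mul_nonneg_right hnonneg (sub_pos.2 hθ.2)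

theorem StationarySubsol.le_supersol [CompactSpace X] (hgeo : IsGeodesicSpace X)
    {G : X → ℝ → ℝ} (hG : Continuous fun w : X × ℝ => G w.1 w.2)
    (hconv : ∀ x, ConvexOn ℝ univ (G x)) {v w : X → ℝ} {M : NNReal} (hv : Continuous v)
    (hw : LipschitzWith M w) (hsub : StationarySubsol G v) (hsup : StationarySubsol (-G) (-w))
    (hA : ∀ x, 0 ≤ G x 0 → v x ≤ w x) : v ≤ w := fun x => by
  have : Nonempty X := ⟨x⟩
  obtain ⟨N, hN⟩ := (isCompact_univ (X := X)).exists_bound_of_continuousOn hv.continuousOn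
  have hscaled : ∀ θ ∈ Ioo (0 : ℝ) 1, θ * v x - w x ≤ (1 - θ) * N := fun θ hθ => by
    obtain ⟨a, p, hmax, hGdiv, hGp⟩ := hsub.exists_max_sub hgeo hG hv hw hsup hθ.1
    have hva : v a ≤ w a := hA a (map_zero_nonneg_of_map_div_nonpos (hconv a) hθ hGdiv hGp)
    have hNa : (1 - θ) * -v a ≤ (1 - θ) * N :=
      mul_le_mul_of_nonneg_left ((neg_le_abs _).trans (hN a (mem_univ a))) (sub_pos.2 hθ.2).le
    linarith [hmax x]
  have hlim : ∀ f : ℝ → ℝ, Continuous f → Tendsto f (𝓝[<] 1) (𝓝 (f 1)) := fun f hf =>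
    (hf.tendsto 1).mono_left nhdsWithin_le_nhds
  have hle := le_of_tendsto_of_tendsto (hlim (fun θ => θ * v x - w x) (by fun_prop))
    (hlim (fun θ => (1 - θ) * N) (by fun_prop))
    (eventually_of_mem (Ioo_mem_nhdsLT one_pos) hscaled)
  simpa using hle

/-! ### Large time behavior -/

theorem map_zero_le_of_convexOn_of_even {f : ℝ → ℝ} (hf : ConvexOn ℝ univ f)
    (heven : ∀ p, f p = f |p|) (p : ℝ) : f 0 ≤ f p := by
  have hmid := hf.2 (mem_univ p) (mem_univ (-p)) one_half_pos.le one_half_pos.le (add_halves 1)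
  rw [smul_neg, add_neg_cancel, heven (-p), abs_neg, ← heven, ← add_smul, add_halves, one_smul]
    at hmid
  exact hmid

theorem EvolutionSubsol.exists_isUniformLimsup_stationarySubsol [CompactSpace X] {H : X → ℝ → ℝ}
    {u : ℝ × X → ℝ} (h : EvolutionSubsol H u) (hH : Continuous fun w : X × ℝ => H w.1 w.2)
    {M : NNReal} (hu : LipschitzOnWith M u (Ici 0 ×ˢ univ)) {c B : ℝ}
    (hB : ∀ t ≥ 0, ∀ x, |u (t, x) + c * t| ≤ B) :
    ∃ v, LipschitzWith M v ∧ IsUniformLimsup atTop (fun t x => u (t, x) + c * t) v ∧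
      StationarySubsol (fun x p => H x p - c) v := by
  have hLip : ∀ᶠ t in atTop, LipschitzWith M fun x => u (t, x) + c * t := by
    filter_upwards [eventually_ge_atTop 0] with t ht
    exact LipschitzWith.of_dist_le_mul fun x y => by
      simpa only [dist_add_right] using (lipschitzWith_slice hu (mem_Ici.2 ht)).dist_le_mul x y
  obtain ⟨v, hv, hlim⟩ := exists_isUniformLimsup hLip ((eventually_ge_atTop 0).mono hB)
  exact ⟨v, hv, hlim, h.stationarySubsol hH
    (hu.continuousOn.mono (prod_mono Ioi_subset_Ici_self subset_rfl)) hlim⟩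

theorem stmt17_general [CompactSpace X] (hgeo : IsGeodesicSpace X) {H : X → ℝ → ℝ}
    (hH : Continuous fun w : X × ℝ => H w.1 w.2) (hconv : ∀ x, ConvexOn ℝ univ (H x))
    (hmin : ∀ x p, H x 0 ≤ H x p) {c : ℝ} (hc : IsGreatest (range fun x => H x 0) c)
    {u : ℝ × X → ℝ} {M : NNReal} (hu : LipschitzOnWith M u (Ici 0 ×ˢ univ))
    (husol : IsSol (Ioi (0 : ℝ) ×ˢ (univ : Set X)) (fun z p q => q + H z.2 p)
      fun z => (u z : EReal)) :
    ∃ v : X → ℝ, TendstoUniformly (fun t x => u (t, x) + c * t) v atTop ∧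
      IsSolS univ (fun x p => H x p - c) fun x => (v x : EReal) := by
  have hG : Continuous fun w : X × ℝ => H w.1 w.2 - c := hH.sub continuous_const
  have hHx : ∀ x, Continuous (H x) := fun x => hH.comp (Continuous.prodMk_right x)
  have hGx : ∀ x, Continuous fun p => H x p - c := fun x => (hHx x).sub continuous_const
  have hcont := hu.continuousOn.mono (prod_mono_left (Ioi_subset_Ici_self (a := 0)))
  have hsub := husol.1.evolutionSubsol hHx hcont
  have hsup := husol.2.evolutionSubsol_neg hHx hcont
  obtain ⟨⟨a, ha⟩, hub⟩ := hc
  obtain ⟨B, hB⟩ := hsub.exists_abs_add_mul_le hsup hu (fun q => ha.ge.trans (hmin a q))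
    fun x => hub ⟨x, rfl⟩
  obtain ⟨v₁, hv₁, hlim₁, hsub₁⟩ := hsub.exists_isUniformLimsup_stationarySubsol hH hu hB
  have hw_neg : ∀ t x, (-u) (t, x) + -c * t = -(u (t, x) + c * t) := fun t x => by
    rw [Pi.neg_apply, neg_mul, neg_add]
  obtain ⟨v₂, hv₂, hlim₂, hsub₂⟩ := hsup.exists_isUniformLimsup_stationarySubsol hH.neg hu.neg
    (c := -c) fun t ht x => by rw [hw_neg, abs_neg]; exact hB t ht x
  replace hlim₂ : IsUniformLimsup atTop (-fun t x => u (t, x) + c * t) v₂ := by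
    simp only [hw_neg] at hlim₂
    exact hlim₂
  replace hsub₂ : StationarySubsol (-fun x p => H x p - c) v₂ := by
    simpa only [Pi.neg_def, neg_sub, neg_sub_neg] using hsub₂
  have hcomp : v₁ ≤ -v₂ := hsub₁.le_supersol hgeo hG
    (fun x => (hconv x).sub (concaveOn_const c convex_univ)) hv₁.continuous hv₂.neg
    (by rwa [neg_neg]) fun x hx => hlim₁.le_neg_of_antitoneOn hlim₂
      (hsub.antitoneOn hu fun q => (sub_nonneg.1 hx).trans (hmin x q))
  obtain rfl : v₂ = -v₁ := neg_eq_iff_eq_neg.1 ((hlim₁.neg_le hlim₂).antisymm hcomp)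
  exact ⟨v₁, hlim₁.tendstoUniformly hlim₂, hsub₁.isSubsolS hGx hv₁.continuous,
    hsub₂.isSupersolS hGx hv₁.continuous⟩

/-- large time behavior. -/
theorem stmt17 [CompactSpace X] [Nonempty X] (hgeo : IsGeodesicSpace X)
    (H : X → ℝ → ℝ)
    (heven : ∀ x p, H x p = H x |p|)
    (hA1 : Continuous fun w : X × ℝ => H w.1 w.2)
    (hA2 : ∀ x, ConvexOn ℝ Set.univ (H x))
    (hA3 : ∀ M : ℝ, ∃ p₀ : ℝ, ∀ p ≥ p₀, ∀ x, M ≤ H x p)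
    (hA4 : BddAbove (Set.range fun x => H x 0))
    (c : ℝ) (hc : IsGreatest (Set.range fun x => H x 0) c)
    (u₀ : X → ℝ) (L₀ : NNReal) (hu₀ : LipschitzWith L₀ u₀)
    (u : ℝ × X → ℝ)
    (hulip : ∃ M : ℝ, ∀ z ∈ Set.Ici (0:ℝ) ×ˢ (Set.univ : Set X),
      ∀ w ∈ Set.Ici (0:ℝ) ×ˢ (Set.univ : Set X), |u z - u w| ≤ M * dist z w)
    (hini : ∀ x : X, u (0, x) = u₀ x)
    (husol : IsSol (Set.Ioi (0:ℝ) ×ˢ (Set.univ : Set X)) (fun z p q => q + H z.2 p)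
      (fun z => ((u z : ℝ) : EReal))) :
    ∃ v : X → ℝ,
      TendstoUniformly (fun (t : ℝ) (x : X) => u (t, x) + c * t) v Filter.atTop ∧
      IsSolS (Set.univ : Set X) (fun x p => H x p - c) (fun x => ((v x : ℝ) : EReal)) := by
  exact stmt17_general hgeo hA1 hA2 (fun x => map_zero_le_of_convexOn_of_even (hA2 x) (heven x)) hc
    (LipschitzOnWith.of_dist_le' hulip.choose_spec) husol
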